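/- For all positive integers d and n, one has Σ_{k=1}^{n} C(n,k) · (−1)^{k−1} · ζ*_k({1}_d; 2) = 0 if n is even, and = 2/n^d if n is odd. -/

import Mathlib

/-- `ent m α` is the entry `n_{α+1}` (0-indexed access) of the index tuple `m`,
with junk value `1` out of range. -/
def ent {L : ℕ} (m : Fin L → ℕ) (α : ℕ) : ℕ :=
  if h : α < L then m ⟨α, h⟩ else 1

/-- The finite set of index tuples `(n₁,…,n_L)` with `n ≥ n₁ ≥ n₂ ≥ ⋯ ≥ n_L ≥ 1`. -/
def Idx (n L : ℕ) : Finset (Fin L → ℕ) :=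
  (Fintype.piFinset fun _ : Fin L => Finset.Icc 1 n).filter
    fun m => ∀ i j : Fin L, i ≤ j → m j ≤ m i

/-- Generalized multiple harmonic-star value
`ζ*_k(s₁,…,s_d; a) = ∑_{k ≥ n₁ ≥ ⋯ ≥ n_d ≥ 1} a^{n_d}/(n₁^{s₁} ⋯ n_d^{s_d})`. -/
noncomputable def zetaStarK (k : ℕ) (s : List ℕ) (a : ℝ) : ℝ :=
  ∑ m ∈ Idx k s.length,
    a ^ ent m (s.length - 1) / ∏ i : Fin s.length, (m i : ℝ) ^ s.get i

/-- Mneimneh-like sum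
`M_n^{(s₁,…,s_d)}(a,p) = ∑_{k=1}^n C(n,k)·p^k·(1-p)^{n-k}·ζ*_k(s;a)`. -/
noncomputable def M (n : ℕ) (s : List ℕ) (a p : ℝ) : ℝ :=
  ∑ k ∈ Finset.Icc 1 n, (n.choose k : ℝ) * p ^ k * (1 - p) ^ (n - k) * zetaStarK k s a

/-!
Write `T n f = ∑_{k=1}^n C(n,k) (-1)^(k-1) f(k)`. The tails of the alternating row of binomial
coefficients telescope, so exchanging summations gives `n · T n F = T n (k ↦ k g(k))` for the
partial sums `F(k) = g(1) + ⋯ + g(k)`. Prepending an exponent `1` to a star sum replaces it by the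
partial sums of its quotient by `j`, which divides `T n` by `n`. Iterating `d` times reduces
`T n (ζ*({1}_d; a))` to `T n (k ↦ a^k) / n^d`, and `T n (k ↦ a^k) = 1 - (1 - a)^n`.
-/

open Finset

section AlternatingBinomialSum

variable {R : Type*} [CommRing R]

/-- The alternating binomial transform `∑_{k=1}^n C(n,k) (-1)^(k-1) f(k)` of a sequence `f`, which
carries the recursion on the depth of the star sums. The term `k = 0` is left out, so that the
truncated exponent `k - 1` is a true difference. -/
def altBinomSum (n : ℕ) (f : ℕ → R) : R :=
  ∑ k ∈ Icc 1 n, (n.choose k : R) * (-1) ^ (k - 1) * f k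

theorem altBinomSum_pow (n : ℕ) (a : R) : altBinomSum n (fun k => a ^ k) = 1 - (1 - a) ^ n := by
  have binomial : (1 - a) ^ n = ∑ k ∈ range (n + 1), (-a) ^ k * n.choose k := by
    simpa [sub_eq_neg_add] using add_pow (-a) 1 n
  rw [binomial, sum_range_succ', altBinomSum, ← Ico_add_one_right_eq_Icc, sum_Ico_eq_sum_range,
    pow_zero, Nat.choose_zero_right, Nat.cast_one, one_mul, sub_add_cancel_right,
    ← sum_neg_distrib]
  refine sum_congr rfl fun i _ => ?_
  rw [add_comm 1 i, Nat.add_sub_cancel, neg_pow a]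
  ring

theorem sum_Icc_choose_mul_neg_one_pow (i n : ℕ) :
    ∑ k ∈ Icc (i + 1) (n + 1), ((n + 1).choose k : R) * (-1) ^ (k - 1) =
      (-1) ^ i * n.choose i := by
  obtain hi | hi := lt_or_ge n i
  · simp [Nat.choose_eq_zero_of_lt hi, hi]
  · induction hi using Nat.decreasingInduction with
    | self => simp
    | of_succ i hi ih =>
      rw [← add_sum_Ioc_eq_sum_Icc (by lia), ← Icc_add_one_left_eq_Ioc, ih, Nat.choose_succ_succ',
        Nat.add_sub_cancel]
      push_cast
      ring

theorem natCast_mul_sum_Icc_choose_mul_neg_one_pow {j : ℕ} (hj : 1 ≤ j) (n : ℕ) :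
    (n : R) * ∑ k ∈ Icc j n, (n.choose k : R) * (-1) ^ (k - 1) =
      n.choose j * (-1) ^ (j - 1) * j := by
  obtain ⟨i, rfl⟩ := Nat.exists_eq_add_of_le' hj
  cases n with
  | zero => simp
  | succ n =>
    have absorption : ((n + 1 : ℕ) : R) * n.choose i = (n + 1).choose (i + 1) * (i + 1 : ℕ) := by
      rw [← Nat.cast_mul, ← Nat.cast_mul, Nat.add_one_mul_choose_eq]
    rw [sum_Icc_choose_mul_neg_one_pow, Nat.add_sub_cancel]
    linear_combination (-1) ^ i * absorption

theorem natCast_mul_altBinomSum_sum_Icc (n : ℕ) (g : ℕ → R) :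
    (n : R) * altBinomSum n (fun k => ∑ j ∈ Icc 1 k, g j) = altBinomSum n (fun k => k * g k) := by
  have swap : altBinomSum n (fun k => ∑ j ∈ Icc 1 k, g j) =
      ∑ j ∈ Icc 1 n, ∑ k ∈ Icc j n, (n.choose k : R) * (-1) ^ (k - 1) * g j := by
    simp only [altBinomSum, mul_sum]
    exact sum_comm' fun k j => by simp only [mem_Icc]; lia
  rw [swap, mul_sum]
  refine sum_congr rfl fun j hj => ?_
  rw [← sum_mul, ← mul_assoc, natCast_mul_sum_Icc_choose_mul_neg_one_pow (mem_Icc.1 hj).1,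
    mul_assoc]

end AlternatingBinomialSum

theorem natCast_mul_altBinomSum_sum_Icc_div {K : Type*} [Field K] [CharZero K] (n : ℕ)
    (f : ℕ → K) :
    (n : K) * altBinomSum n (fun k => ∑ j ∈ Icc 1 k, f j / j) = altBinomSum n f := by
  rw [natCast_mul_altBinomSum_sum_Icc]
  refine sum_congr rfl fun k hk => ?_
  have hk0 : (k : K) ≠ 0 := Nat.cast_ne_zero.2 (Nat.one_le_iff_ne_zero.1 (mem_Icc.1 hk).1)
  exact congrArg _ (mul_div_cancel₀ _ hk0)

theorem ent_cons_zero {L : ℕ} (j : ℕ) (m : Fin L → ℕ) :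
    ent (Fin.cons j m : Fin (L + 1) → ℕ) 0 = j := by
  simp [ent]

theorem ent_cons_succ {L : ℕ} (j : ℕ) (m : Fin L → ℕ) (α : ℕ) :
    ent (Fin.cons j m : Fin (L + 1) → ℕ) (α + 1) = ent m α := by
  by_cases h : α < L
  · simpa [ent, h] using Fin.cons_succ (α := fun _ => ℕ) j m ⟨α, h⟩
  · simp [ent, h]

theorem mem_Idx {n L : ℕ} {m : Fin L → ℕ} :
    m ∈ Idx n L ↔ (∀ i, 1 ≤ m i ∧ m i ≤ n) ∧ Antitone m := by
  simp [Idx, Antitone]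

theorem cons_mem_Idx {k L j : ℕ} {m : Fin L → ℕ} :
    (Fin.cons j m : Fin (L + 1) → ℕ) ∈ Idx k (L + 1) ↔ j ∈ Icc 1 k ∧ m ∈ Idx j L := by
  simp only [mem_Idx, Antitone, Fin.forall_fin_succ, Fin.cons_zero, Fin.cons_succ, mem_Icc]
  grind

theorem Idx_zero (k : ℕ) : Idx k 0 = {Fin.elim0} := by
  ext m
  simp [mem_Idx, Subsingleton.antitone, eq_iff_true_of_subsingleton]

theorem sum_Idx_succ {A : Type*} [AddCommMonoid A] (k L : ℕ) (f : (Fin (L + 1) → ℕ) → A) :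
    ∑ m ∈ Idx k (L + 1), f m = ∑ j ∈ Icc 1 k, ∑ m ∈ Idx j L, f (Fin.cons j m) := by
  rw [sum_sigma']
  refine sum_nbij' (fun m => ⟨m 0, Fin.tail m⟩) (fun p => Fin.cons p.1 p.2) ?_ ?_ ?_ ?_ ?_
  · intro m hm
    rw [← Fin.cons_self_tail m, cons_mem_Idx] at hm
    exact mem_sigma.2 hm
  · exact fun p hp => cons_mem_Idx.2 (mem_sigma.1 hp)
  · exact fun m _ => Fin.cons_self_tail m
  · exact fun p _ => rfl
  · exact fun m _ => by rw [Fin.cons_self_tail]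

/-- The recursion on the depth starts here and not at the empty list, where `ent` makes
`zetaStarK k [] a` equal to `a`. -/
theorem zetaStarK_singleton (k s : ℕ) (a : ℝ) :
    zetaStarK k [s] a = ∑ j ∈ Icc 1 k, a ^ j / (j : ℝ) ^ s := by
  simp [zetaStarK, sum_Idx_succ, Idx_zero, ent_cons_zero]

theorem zetaStarK_cons (k s : ℕ) {t : List ℕ} (ht : t ≠ []) (a : ℝ) :
    zetaStarK k (s :: t) a = ∑ j ∈ Icc 1 k, zetaStarK j t a / (j : ℝ) ^ s := by
  obtain ⟨u, t, rfl⟩ := List.exists_cons_of_ne_nil ht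
  simp only [zetaStarK, sum_div]
  refine (sum_Idx_succ k _ _).trans (sum_congr rfl fun j _ => sum_congr rfl fun m _ => ?_)
  have last_entry : ent (Fin.cons j m : Fin ((u :: t).length + 1) → ℕ) (u :: t).length =
      ent m ((u :: t).length - 1) := ent_cons_succ j m t.length
  simp only [List.length_cons, Nat.add_sub_cancel] at last_entry ⊢
  rw [last_entry, Fin.prod_univ_succ, div_div, mul_comm]
  rfl

theorem pow_mul_altBinomSum_zetaStarK_replicate_one {d : ℕ} (hd : 0 < d) (n : ℕ) (a : ℝ) :
    (n : ℝ) ^ d * altBinomSum n (fun k => zetaStarK k (List.replicate d 1) a) =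
      1 - (1 - a) ^ n := by
  induction d, hd using Nat.le_induction with
  | base =>
    simp only [List.replicate_one, zetaStarK_singleton, pow_one]
    rw [natCast_mul_altBinomSum_sum_Icc_div, altBinomSum_pow]
  | succ d hd ih =>
    have hne : List.replicate d 1 ≠ [] := by simpa using Nat.ne_of_gt hd
    simp only [List.replicate_succ, zetaStarK_cons _ _ hne, pow_one]
    rw [pow_succ, mul_assoc, natCast_mul_altBinomSum_sum_Icc_div, ih]

theorem stmt_7_general (d n : ℕ) (hd : 0 < d) (hn : 0 < n) (a : ℝ) :
    ∑ k ∈ Icc 1 n, (n.choose k : ℝ) * (-1) ^ (k - 1) * zetaStarK k (List.replicate d 1) a =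
      (1 - (1 - a) ^ n) / (n : ℝ) ^ d := by
  have hnd : (n : ℝ) ^ d ≠ 0 := by positivity
  rw [eq_div_iff hnd, mul_comm]
  exact pow_mul_altBinomSum_zetaStarK_replicate_one hd n a

/-- Alternating binomial sum of `ζ*_k({1}_d; 2)`: vanishes for even `n`,
equals `2/n^d` for odd `n`. -/
theorem stmt_7 (d n : ℕ) (hd : 0 < d) (hn : 0 < n) :
    ∑ k ∈ Finset.Icc 1 n,
        (n.choose k : ℝ) * (-1) ^ (k - 1) * zetaStarK k (List.replicate d 1) 2 =
      if Even n then 0 else 2 / (n : ℝ) ^ d := by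
  rw [stmt_7_general d n hd hn, show (1 : ℝ) - 2 = -1 by norm_num, neg_one_pow_eq_ite]
  split_ifs <;> norm_num
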